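/- Let φ be a 3-SAT formula with clauses c_1,…,c_ℓ over variables x_1,…,x_m, let β ∈ (0,1), and let ε satisfy 0 < ε < min{β(1−β)^3, β(1−β)^2(2−β), β²(1−β)^3/(1+β), β²(1−β)^2(2−β)/(1+β)}. If φ has no satisfying assignment, then the task graph G(φ,β,ε) admits no cost configuration that is motivating for any reward r ≤ (1 + β(1−β)^4)/β. Together with the fact that a satisfiable φ yields a cost configuration motivating for reward 1/β, this creates a multiplicative gap of 1 + β(1−β)^4 in the optimal motivating reward, which for β = 1/5 equals 1.08192. -/

import Mathlib

/-!
Write `a = 1 - β`, `f = a³ - ε` (the cost of a forward edge) and `L = 2 - β`; note `a² + β L = 1`.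
A reward `r ≤ (1 + β a⁴) / β` means that the agent never accepts a perceived cost above
`R = 1 + β a⁴`, and `R < L`.

Call a variable node `w_{k,y}` *blocked* if the detour `w_{k,y} → z_{k,y} → t` costs at least
`L + f` after the modification. Everything rests on three facts.

* A visited variable node is blocked. The agent cannot enter `z_{k,y}`, because she would abandon
  there (`z_{k,y} → t` costs at least `L > R`). Hence she moves forward at a perceived cost of at
  least `f + β L`, and the detour is not cheaper: `c(w,z) + β c(z,t) ≥ f + β L`. Together with
  `c(z,t) ≥ L` this gives `c(w,z) + c(z,t) ≥ f + L` (`SatCosts.blocked_of_visited`).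
* The function `satPot` is a feasible potential, hence a lower bound for the distance to `t`
  (`pot_le_dcost`). It gives blocked variable nodes the value `L + f` and literal nodes whose
  shortcut leads to a blocked node the value `L + a² + f`.
* Consequently the agent never takes a type-one shortcut (perceived cost at least
  `a² + β (L + f) = 1 + β a³ - β ε > R`), and she never enters a literal node whose shortcut leads
  to a blocked node (perceived cost at least `f + β (L + a² + f) = 1 + β a³ - (1 + β) ε > R`).

A motivated agent therefore visits, for every clause, a literal node whose shortcut leads to an
unblocked node, and, for every variable `x_k`, some `w_{k,y}`, which is blocked. Setting `x_k` to
that `y` satisfies every clause.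
-/

/-!
Framework: task graphs, present-biased agents, perceived costs, greedy walks,
motivating rewards, cost configurations and subgraphs
(Kleinberg–Oren model, following Albers–Kraft).
-/

variable {V : Type} [Fintype V] [DecidableEq V]

/-- The list of (directed) edges traversed by a walk given as a list of vertices. -/
def walkEdges (p : List V) : List (V × V) := p.zip p.tail

/-- `p` is a walk in the edge set `E`: consecutive vertices are joined by edges. -/
def IsWalk (E : Finset (V × V)) (p : List V) : Prop :=
  List.Chain' (fun u v : V => (u, v) ∈ E) p

/-- `p` is a walk in `E` from `a` to `b`. -/
def IsWalkFrom (E : Finset (V × V)) (p : List V) (a b : V) : Prop :=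
  IsWalk E p ∧ p.head? = some a ∧ p.getLast? = some b

/-- There is a walk in `E` from `a` to `b`. -/
def Reaches (E : Finset (V × V)) (a b : V) : Prop :=
  ∃ p : List V, IsWalkFrom E p a b

/-- Total cost of a walk. -/
noncomputable def walkCost (c : V × V → ℝ) (p : List V) : ℝ :=
  ((walkEdges p).map c).sum

/-- A task graph: a finite DAG with source `s`, target `t`, nonnegative edge
costs, in which every node lies on some directed path from `s` to `t`. -/
structure TaskGraph (V : Type) [Fintype V] [DecidableEq V] where
  E : Finset (V × V)
  s : V
  t : V
  c : V × V → ℝ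
  c_nonneg : ∀ e ∈ E, 0 ≤ c e
  acyclic : ∀ p : List V, IsWalk E p → p.Nodup
  onPath : ∀ v : V, ∃ p : List V, IsWalkFrom E p s t ∧ v ∈ p

/-- `dcost E c t v` : cost of a cheapest walk from `v` to `t` in `E` w.r.t. costs `c`. -/
noncomputable def dcost (E : Finset (V × V)) (c : V × V → ℝ) (t v : V) : ℝ :=
  sInf (walkCost c '' {p : List V | IsWalkFrom E p v t})

/-- Perceived cost `η(v,w) = c(v,w) + β d(w)` of an edge for a `β`-present-biased agent. -/
noncomputable def etaCost (E : Finset (V × V)) (c : V × V → ℝ) (t : V) (β : ℝ)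
    (e : V × V) : ℝ :=
  c e + β * dcost E c t e.2

/-- Lowest perceived cost `ζ(v)`: the infimum of `η(v,w)` over edges `(v,w) ∈ E`
whose head `w` admits a continuation to `t` (i.e. over the agent's possible plans). -/
noncomputable def zetaCost (E : Finset (V × V)) (c : V × V → ℝ) (t : V) (β : ℝ)
    (v : V) : ℝ :=
  sInf {x : ℝ | ∃ w : V, (v, w) ∈ E ∧ Reaches E w t ∧ etaCost E c t β (v, w) = x}

/-- One step of the agent's greedy walk for reward `r`: she traverses only
edges realizing the lowest perceived cost, and only if `ζ(v) ≤ β r`. -/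
def GreedyStep (E : Finset (V × V)) (c : V × V → ℝ) (t : V) (β r : ℝ) (v w : V) : Prop :=
  v ≠ t ∧ (v, w) ∈ E ∧ Reaches E w t ∧
    etaCost E c t β (v, w) = zetaCost E c t β v ∧ zetaCost E c t β v ≤ β * r

/-- Nodes the agent may visit on some greedy walk from `s`. -/
inductive AgentReach (E : Finset (V × V)) (c : V × V → ℝ) (s t : V) (β r : ℝ) : V → Prop
  | start : AgentReach E c s t β r s
  | step {v w : V} : AgentReach E c s t β r v → GreedyStep E c t β r v w →
      AgentReach E c s t β r w

/-- The task graph (with edge set `E`, costs `c`) is motivating for reward `r`: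
at every node the agent may reach, she neither abandons nor gets stuck,
i.e. she can always perform a greedy step (hence, the graph being a finite DAG,
she reaches `t` on every greedy walk). -/
def Motivating (E : Finset (V × V)) (c : V × V → ℝ) (s t : V) (β r : ℝ) : Prop :=
  ∀ v : V, AgentReach E c s t β r v → v ≠ t → ∃ w : V, GreedyStep E c t β r v w

/-- A complete greedy walk of the agent from `s` to `t`. -/
def AgentWalk (E : Finset (V × V)) (c : V × V → ℝ) (s t : V) (β r : ℝ) (p : List V) : Prop :=
  IsWalkFrom E p s t ∧ List.Chain' (GreedyStep E c t β r) p

/-- An initial segment of a greedy walk of the agent starting at `s`. -/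
def GreedyPrefix (E : Finset (V × V)) (c : V × V → ℝ) (s t : V) (β r : ℝ) (p : List V) : Prop :=
  p.head? = some s ∧ List.Chain' (GreedyStep E c t β r) p

/-- A cost configuration: nonnegative extra costs on the edges. -/
def CostConfig (c' : V × V → ℝ) : Prop := ∀ e : V × V, 0 ≤ c' e

/-- The modified costs obtained by applying a cost configuration to `G`. -/
noncomputable def addc (G : TaskGraph V) (c' : V × V → ℝ) : V × V → ℝ :=
  fun e => G.c e + c' e

/-- The cost configuration `c'` is motivating for reward `r` on `G`. -/
def MotivatingConfig (G : TaskGraph V) (β r : ℝ) (c' : V × V → ℝ) : Prop :=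
  Motivating G.E (addc G c') G.s G.t β r

/-- The subgraph of `G` with edge set `E'` (retaining an `s`–`t` path) is
motivating for reward `r`; all quantities are computed within the subgraph. -/
def MotivatingSubgraph (G : TaskGraph V) (β r : ℝ) (E' : Finset (V × V)) : Prop :=
  E' ⊆ G.E ∧ (∃ p : List V, IsWalkFrom E' p G.s G.t) ∧ Motivating E' G.c G.s G.t β r

/-! The node set of the 3-SAT reduction graph `G(φ, β, ε)`. A 3-SAT formula with
`ℓ` clauses over `m` variables is encoded as `φ : Fin ℓ → Fin 3 → Fin m × Bool`,
where `φ i j = (k, b)` says that the `j`-th literal of clause `i` is `x_k` (if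
`b = true`) resp. `¬ x_k` (if `b = false`). An assignment `τ : Fin m → Bool`
satisfies `φ` iff every clause contains a literal `(k, b)` with `τ k = b`. -/

/-- Nodes of `G(φ, β, ε)`: the special nodes `s, t, u₁, …, u₅`, the literal nodes
`v_{i,j}`, the variable nodes `w_{k,y}` and the intermediate nodes `z_{k,y}`. -/
abbrev SatNode (ℓ m : ℕ) : Type :=
  Fin 7 ⊕ (Fin ℓ × Fin 3) ⊕ (Fin m × Bool) ⊕ (Fin m × Bool)

/-- The source `s`. -/
def nS {ℓ m : ℕ} : SatNode ℓ m := Sum.inl 0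

/-- The target `t`. -/
def nT {ℓ m : ℕ} : SatNode ℓ m := Sum.inl 1

/-- The node `u_{i+1}` for `i : Fin 5`. -/
def nU {ℓ m : ℕ} (i : Fin 5) : SatNode ℓ m := Sum.inl ⟨(i : ℕ) + 2, by omega⟩

/-- The literal node `v_{i,j}` (`0`-indexed). -/
def nLit {ℓ m : ℕ} (i : Fin ℓ) (j : Fin 3) : SatNode ℓ m := Sum.inr (Sum.inl (i, j))

/-- The variable node `w_{k,y}` (`0`-indexed; `y = true` means `T`). -/
def nVar {ℓ m : ℕ} (k : Fin m) (y : Bool) : SatNode ℓ m :=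
  Sum.inr (Sum.inr (Sum.inl (k, y)))

/-- The intermediate node `z_{k,y}` of the type-three shortcut out of `w_{k,y}`. -/
def nMid {ℓ m : ℕ} (k : Fin m) (y : Bool) : SatNode ℓ m :=
  Sum.inr (Sum.inr (Sum.inr (k, y)))

/-- The edge relation of the 3-SAT reduction graph `G(φ, β, ε)`. -/
def SatEdge {ℓ m : ℕ} (φ : Fin ℓ → Fin 3 → Fin m × Bool) (a b : SatNode ℓ m) : Prop :=
  -- forward edges s → v_{1,j}
  (∃ (i : Fin ℓ) (j : Fin 3), (i : ℕ) = 0 ∧ a = nS ∧ b = nLit i j) ∨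
  -- forward edges v_{i,j} → v_{i+1,j'}
  (∃ (i i' : Fin ℓ) (j j' : Fin 3), (i' : ℕ) = (i : ℕ) + 1 ∧ a = nLit i j ∧ b = nLit i' j') ∨
  -- forward edges v_{ℓ,j} → u₁
  (∃ (i : Fin ℓ) (j : Fin 3), (i : ℕ) = ℓ - 1 ∧ a = nLit i j ∧ b = nU 0) ∨
  -- forward edges u₂ → w_{1,y}
  (∃ (k : Fin m) (y : Bool), (k : ℕ) = 0 ∧ a = nU 1 ∧ b = nVar k y) ∨
  -- forward edges w_{k,y} → w_{k+1,y'}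
  (∃ (k k' : Fin m) (y y' : Bool), (k' : ℕ) = (k : ℕ) + 1 ∧ a = nVar k y ∧ b = nVar k' y') ∨
  -- forward edges w_{m,y} → u₃
  (∃ (k : Fin m) (y : Bool), (k : ℕ) = m - 1 ∧ a = nVar k y ∧ b = nU 2) ∨
  -- shortcuts of type one: v_{i,j} → w_{k,F} if the j-th literal of cᵢ is x_k,
  -- and v_{i,j} → w_{k,T} if it is ¬x_k
  (∃ (i : Fin ℓ) (j : Fin 3), a = nLit i j ∧ b = nVar (φ i j).1 (!(φ i j).2)) ∨
  -- shortcut of type two: u₂ → t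
  (a = nU 1 ∧ b = nT) ∨
  -- shortcuts of type three: w_{k,y} → z_{k,y} → t
  (∃ (k : Fin m) (y : Bool), a = nVar k y ∧ b = nMid k y) ∨
  (∃ (k : Fin m) (y : Bool), a = nMid k y ∧ b = nT) ∨
  -- the remaining edges u₁ → u₂, u₃ → u₄, u₄ → u₅, u₅ → t
  (a = nU 0 ∧ b = nU 1) ∨ (a = nU 2 ∧ b = nU 3) ∨ (a = nU 3 ∧ b = nU 4) ∨ (a = nU 4 ∧ b = nT)

/-- The costs of the edges of the 3-SAT reduction graph `G(φ, β, ε)`: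
forward edges cost `(1−β)³ − ε`, type-one shortcuts cost `(1−β)²`, the type-two
shortcut costs `2 − β`, type-three shortcuts cost `0` and `2 − β`, and the edges
`u₁u₂, u₃u₄, u₄u₅, u₅t` cost `(1−β)², (1−β)², 1−β, 1`. -/
def SatCostSpec {ℓ m : ℕ} (β ε : ℝ) (G : TaskGraph (SatNode ℓ m)) : Prop :=
  (∀ (i : Fin ℓ) (j : Fin 3), G.c (nS, nLit i j) = (1 - β) ^ 3 - ε) ∧
  (∀ (i i' : Fin ℓ) (j j' : Fin 3), G.c (nLit i j, nLit i' j') = (1 - β) ^ 3 - ε) ∧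
  (∀ (i : Fin ℓ) (j : Fin 3), G.c (nLit i j, nU 0) = (1 - β) ^ 3 - ε) ∧
  (∀ (k : Fin m) (y : Bool), G.c (nU 1, nVar k y) = (1 - β) ^ 3 - ε) ∧
  (∀ (k k' : Fin m) (y y' : Bool), G.c (nVar k y, nVar k' y') = (1 - β) ^ 3 - ε) ∧
  (∀ (k : Fin m) (y : Bool), G.c (nVar k y, nU 2) = (1 - β) ^ 3 - ε) ∧
  (∀ (i : Fin ℓ) (j : Fin 3) (k : Fin m) (y : Bool), G.c (nLit i j, nVar k y) = (1 - β) ^ 2) ∧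
  (G.c (nU 1, nT) = 2 - β) ∧
  (∀ (k : Fin m) (y : Bool), G.c (nVar k y, nMid k y) = 0) ∧
  (∀ (k : Fin m) (y : Bool), G.c (nMid k y, nT) = 2 - β) ∧
  (G.c (nU 0, nU 1) = (1 - β) ^ 2) ∧
  (G.c (nU 2, nU 3) = (1 - β) ^ 2) ∧
  (G.c (nU 3, nU 4) = 1 - β) ∧
  (G.c (nU 4, nT) = 1)

/-- `G` is the 3-SAT reduction task graph `G(φ, β, ε)`. -/
def IsSatGraph {ℓ m : ℕ} (φ : Fin ℓ → Fin 3 → Fin m × Bool) (β ε : ℝ)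
    (G : TaskGraph (SatNode ℓ m)) : Prop :=
  G.s = nS ∧ G.t = nT ∧ (∀ a b : SatNode ℓ m, (a, b) ∈ G.E ↔ SatEdge φ a b) ∧
    SatCostSpec β ε G

/-! ### Potentials bound distances -/

lemma pot_le_walkCost {E : Finset (V × V)} {c : V × V → ℝ} {t : V} {h : V → ℝ} (ht : h t = 0)
    (hE : ∀ a b, (a, b) ∈ E → h a ≤ c (a, b) + h b) :
    ∀ (p : List V) (v : V), IsWalkFrom E p v t → h v ≤ walkCost c p := by
  intro p
  induction p with
  | nil => intro v hp; simp [IsWalkFrom] at hp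
  | cons x q ih =>
    intro v ⟨hw, hh, hl⟩
    obtain rfl : x = v := by simpa using hh
    cases q with
    | nil =>
      obtain rfl : x = t := by simpa using hl
      simp [walkCost, walkEdges, ht]
    | cons y q =>
      have hc : (x, y) ∈ E ∧ IsWalk E (y :: q) :=
        List.isChain_cons_cons.1 hw
      have h1 := ih y ⟨hc.2, by simp, by simpa using hl⟩
      have h2 := hE x y hc.1
      have h3 : walkCost c (x :: y :: q) = c (x, y) + walkCost c (y :: q) := by
        simp [walkCost, walkEdges]
      linarith

/-- A feasible potential bounds the distance to `t` from below. Reachability is needed because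
the infimum over the empty set of walks is `0`. -/
lemma pot_le_dcost {E : Finset (V × V)} {c : V × V → ℝ} {t : V} {h : V → ℝ} (ht : h t = 0)
    (hE : ∀ a b, (a, b) ∈ E → h a ≤ c (a, b) + h b) {v : V} (hv : Reaches E v t) :
    h v ≤ dcost E c t v := by
  obtain ⟨p, hp⟩ := hv
  refine le_csInf ⟨_, p, hp, rfl⟩ ?_
  rintro _ ⟨q, hq, rfl⟩
  exact pot_le_walkCost ht hE q v hq

lemma isWalkFrom_edge {E : Finset (V × V)} {v t : V} (he : (v, t) ∈ E) :
    IsWalkFrom E [v, t] v t :=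
  ⟨List.isChain_pair.2 he, rfl, rfl⟩

lemma dcost_le_edge {E : Finset (V × V)} {c : V × V → ℝ} {t : V}
    (hc : ∀ e ∈ E, 0 ≤ c e) {v : V} (he : (v, t) ∈ E) :
    dcost E c t v ≤ c (v, t) := by
  refine csInf_le ⟨0, ?_⟩ ⟨[v, t], isWalkFrom_edge he, by simp [walkCost, walkEdges]⟩
  rintro _ ⟨q, hq, rfl⟩
  exact pot_le_walkCost (h := fun _ => 0) rfl (fun a b hab => by simpa using hc _ hab) q v hq

lemma zetaCost_le {E : Finset (V × V)} {c : V × V → ℝ} {t : V} {β : ℝ} {v w : V}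
    (he : (v, w) ∈ E) (hw : Reaches E w t) :
    zetaCost E c t β v ≤ etaCost E c t β (v, w) := by
  refine csInf_le (Set.Finite.bddBelow ?_) ⟨w, he, hw, rfl⟩
  refine (Set.finite_range fun w : V => etaCost E c t β (v, w)).subset ?_
  rintro _ ⟨w, -, -, rfl⟩
  exact ⟨w, rfl⟩

/-! ### Out-edges of the reduction graph -/

section Edges

variable {ℓ m : ℕ} {φ : Fin ℓ → Fin 3 → Fin m × Bool} {b : SatNode ℓ m}

lemma satEdge_nS (h : SatEdge φ nS b) :
    ∃ (i : Fin ℓ) (j : Fin 3), (i : ℕ) = 0 ∧ b = nLit i j := by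
  simpa [SatEdge, nS, nT, nU, nLit, nVar, nMid, Fin.ext_iff] using h

lemma satEdge_nLit {i : Fin ℓ} {j : Fin 3} (h : SatEdge φ (nLit i j) b) :
    (∃ (i' : Fin ℓ) (j' : Fin 3), (i' : ℕ) = i + 1 ∧ b = nLit i' j') ∨
      ((i : ℕ) = ℓ - 1 ∧ b = nU 0) ∨ b = nVar (φ i j).1 (!(φ i j).2) := by
  simp [SatEdge, nS, nT, nU, nLit, nVar, nMid] at h ⊢
  grind

lemma satEdge_nU0 (h : SatEdge φ (nU 0) b) : b = nU 1 := by
  simpa [SatEdge, nS, nT, nU, nLit, nVar, nMid, Fin.ext_iff] using h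

lemma satEdge_nU1 (h : SatEdge φ (nU 1) b) :
    (∃ (k : Fin m) (y : Bool), (k : ℕ) = 0 ∧ b = nVar k y) ∨ b = nT := by
  simpa [SatEdge, nS, nT, nU, nLit, nVar, nMid, Fin.ext_iff] using h

lemma satEdge_nVar {k : Fin m} {y : Bool} (h : SatEdge φ (nVar k y) b) :
    (∃ (k' : Fin m) (y' : Bool), (k' : ℕ) = k + 1 ∧ b = nVar k' y') ∨
      ((k : ℕ) = m - 1 ∧ b = nU 2) ∨ b = nMid k y := by
  simp [SatEdge, nS, nT, nU, nLit, nVar, nMid] at h ⊢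
  grind

lemma satEdge_nMid {k : Fin m} {y : Bool} (h : SatEdge φ (nMid k y) b) : b = nT := by
  simpa [SatEdge, nS, nT, nU, nLit, nVar, nMid, Fin.ext_iff] using h

end Edges

/-! ### The potential of the reduction graph -/

section Sat

variable {ℓ m : ℕ}

/-- `w_{k,y}` is blocked under the costs `c`: the detour `w_{k,y} → z_{k,y} → t` costs at least
`(2 - β) + ((1 - β)³ - ε)`. -/
def Blocked (β ε : ℝ) (c : SatNode ℓ m × SatNode ℓ m → ℝ) (k : Fin m) (y : Bool) : Prop :=
  2 - β + ((1 - β) ^ 3 - ε) ≤ c (nVar k y, nMid k y) + c (nMid k y, nT)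

open Classical in
/-- A lower bound for the distance to `t` under the costs `c`. The vector lists the values at
`s, t, u₁, …, u₅`. The value at `z_{k,y}` is the cost of its only out-edge. -/
noncomputable def satPot (φ : Fin ℓ → Fin 3 → Fin m × Bool) (β ε : ℝ)
    (c : SatNode ℓ m × SatNode ℓ m → ℝ) : SatNode ℓ m → ℝ
  | Sum.inl x => ![2 - β + (1 - β) ^ 2, 0, 2 - β + (1 - β) ^ 2, 2 - β, 2 - β, 2 - β, 1] x
  | Sum.inr (Sum.inl (i, j)) => 2 - β + (1 - β) ^ 2 +
      if Blocked β ε c (φ i j).1 (!(φ i j).2) then (1 - β) ^ 3 - ε else 0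
  | Sum.inr (Sum.inr (Sum.inl (k, y))) => 2 - β + if Blocked β ε c k y then (1 - β) ^ 3 - ε else 0
  | Sum.inr (Sum.inr (Sum.inr (k, y))) => c (nMid k y, nT)

/-- The lower bounds on the modified costs `c` of the reduction graph, together with the range of
the parameters and the two consequences of the bound on `ε` that are used. -/
structure SatCosts (φ : Fin ℓ → Fin 3 → Fin m × Bool) (β ε : ℝ)
    (c : SatNode ℓ m × SatNode ℓ m → ℝ) : Prop where
  β_pos : 0 < β
  β_lt : β < 1
  ε_pos : 0 < ε
  ε_lt : ε < β * (1 - β) ^ 3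
  ε_lt' : (1 + β) * ε < β ^ 2 * (1 - β) ^ 3
  s_lit : ∀ i j, (1 - β) ^ 3 - ε ≤ c (nS, nLit i j)
  lit_lit : ∀ i i' j j', (1 - β) ^ 3 - ε ≤ c (nLit i j, nLit i' j')
  lit_u : ∀ i j, (1 - β) ^ 3 - ε ≤ c (nLit i j, nU 0)
  u_var : ∀ k y, (1 - β) ^ 3 - ε ≤ c (nU 1, nVar k y)
  var_var : ∀ k k' y y', (1 - β) ^ 3 - ε ≤ c (nVar k y, nVar k' y')
  var_u : ∀ k y, (1 - β) ^ 3 - ε ≤ c (nVar k y, nU 2)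
  lit_var : ∀ i j k y, (1 - β) ^ 2 ≤ c (nLit i j, nVar k y)
  u_t : 2 - β ≤ c (nU 1, nT)
  var_mid : ∀ k y, 0 ≤ c (nVar k y, nMid k y)
  mid_t : ∀ k y, 2 - β ≤ c (nMid k y, nT)
  u01 : (1 - β) ^ 2 ≤ c (nU 0, nU 1)
  u23 : (1 - β) ^ 2 ≤ c (nU 2, nU 3)
  u34 : 1 - β ≤ c (nU 3, nU 4)
  u4t : 1 ≤ c (nU 4, nT)

namespace SatCosts

variable {φ : Fin ℓ → Fin 3 → Fin m × Bool} {β ε : ℝ} {c : SatNode ℓ m × SatNode ℓ m → ℝ}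

lemma forward_pos (hc : SatCosts φ β ε c) : 0 < (1 - β) ^ 3 - ε := by
  have h : 0 < (1 - β) ^ 3 := pow_pos (by linarith [hc.β_lt]) 3
  nlinarith [hc.ε_lt, hc.β_lt]

lemma pot_lit_ge (hc : SatCosts φ β ε c) (i : Fin ℓ) (j : Fin 3) :
    2 - β + (1 - β) ^ 2 ≤ satPot φ β ε c (nLit i j) := by
  have := hc.forward_pos
  simp only [satPot, nLit]
  split_ifs <;> linarith

lemma pot_lit_le (hc : SatCosts φ β ε c) (i : Fin ℓ) (j : Fin 3) :
    satPot φ β ε c (nLit i j) ≤ 2 - β + (1 - β) ^ 2 + ((1 - β) ^ 3 - ε) := by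
  have := hc.forward_pos
  simp only [satPot, nLit]
  split_ifs <;> linarith

lemma pot_var_ge (hc : SatCosts φ β ε c) (k : Fin m) (y : Bool) :
    2 - β ≤ satPot φ β ε c (nVar k y) := by
  have := hc.forward_pos
  simp only [satPot, nVar]
  split_ifs <;> linarith

lemma pot_var_le (hc : SatCosts φ β ε c) (k : Fin m) (y : Bool) :
    satPot φ β ε c (nVar k y) ≤ 2 - β + ((1 - β) ^ 3 - ε) := by
  have := hc.forward_pos
  simp only [satPot, nVar]
  split_ifs <;> linarith

lemma pot_blocked {k : Fin m} {y : Bool} (hb : Blocked β ε c k y) :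
    satPot φ β ε c (nVar k y) = 2 - β + ((1 - β) ^ 3 - ε) := by
  simp [satPot, nVar, hb]

lemma pot_s : satPot φ β ε c nS = 2 - β + (1 - β) ^ 2 := rfl
lemma pot_t : satPot φ β ε c nT = 0 := rfl
lemma pot_u0 : satPot φ β ε c (nU 0) = 2 - β + (1 - β) ^ 2 := rfl
lemma pot_u1 : satPot φ β ε c (nU 1) = 2 - β := rfl
lemma pot_u2 : satPot φ β ε c (nU 2) = 2 - β := rfl
lemma pot_u3 : satPot φ β ε c (nU 3) = 2 - β := rfl
lemma pot_u4 : satPot φ β ε c (nU 4) = 1 := rfl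
lemma pot_mid (k : Fin m) (y : Bool) : satPot φ β ε c (nMid k y) = c (nMid k y, nT) := rfl

lemma pot_edge (hc : SatCosts φ β ε c) {a b : SatNode ℓ m} (h : SatEdge φ a b) :
    satPot φ β ε c a ≤ c (a, b) + satPot φ β ε c b := by
  have hf := hc.forward_pos
  rcases h with ⟨i, j, -, rfl, rfl⟩ | ⟨i, i', j, j', -, rfl, rfl⟩ | ⟨i, j, -, rfl, rfl⟩ |
    ⟨k, y, -, rfl, rfl⟩ | ⟨k, k', y, y', -, rfl, rfl⟩ | ⟨k, y, -, rfl, rfl⟩ | ⟨i, j, rfl, rfl⟩ |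
    ⟨rfl, rfl⟩ | ⟨k, y, rfl, rfl⟩ | ⟨k, y, rfl, rfl⟩ | ⟨rfl, rfl⟩ | ⟨rfl, rfl⟩ | ⟨rfl, rfl⟩ |
    ⟨rfl, rfl⟩
  · linarith [hc.s_lit i j, hc.pot_lit_ge i j, pot_s (φ := φ) (β := β) (ε := ε) (c := c)]
  · linarith [hc.lit_lit i i' j j', hc.pot_lit_ge i' j', hc.pot_lit_le i j]
  · rw [pot_u0]; linarith [hc.lit_u i j, hc.pot_lit_le i j]
  · rw [pot_u1]; linarith [hc.u_var k y, hc.pot_var_ge k y]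
  · linarith [hc.var_var k k' y y', hc.pot_var_ge k' y', hc.pot_var_le k y]
  · rw [pot_u2]; linarith [hc.var_u k y, hc.pot_var_le k y]
  · have := hc.lit_var i j (φ i j).1 (!(φ i j).2)
    simp only [satPot, nLit, nVar] at *
    linarith
  · rw [pot_u1, pot_t]; linarith [hc.u_t]
  · have h1 := hc.var_mid k y
    have h2 := hc.mid_t k y
    rw [pot_mid]
    by_cases hb : Blocked β ε c k y
    · rw [pot_blocked hb]; exact hb
    · simp only [satPot, nVar, hb, if_false] at *; linarith
  · rw [pot_mid, pot_t]; linarith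
  · rw [pot_u0, pot_u1]; linarith [hc.u01]
  · rw [pot_u2, pot_u3]; linarith [hc.u23, sq_nonneg (1 - β)]
  · rw [pot_u3, pot_u4]; linarith [hc.u34]
  · rw [pot_u4, pot_t]; linarith [hc.u4t]

/-! ### The agent's moves -/

variable {E : Finset (SatNode ℓ m × SatNode ℓ m)} {r : ℝ}

lemma le_eta (hc : SatCosts φ β ε c) (hE : ∀ a b, (a, b) ∈ E ↔ SatEdge φ a b)
    {v w : SatNode ℓ m} (hw : Reaches E w nT) :
    c (v, w) + β * satPot φ β ε c w ≤ etaCost E c nT β (v, w) := by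
  have := pot_le_dcost (c := c) pot_t (fun a b hab => hc.pot_edge ((hE a b).1 hab)) hw
  have := mul_le_mul_of_nonneg_left this hc.β_pos.le
  simp only [etaCost]
  linarith

lemma greedy_le (hc : SatCosts φ β ε c) (hE : ∀ a b, (a, b) ∈ E ↔ SatEdge φ a b)
    (hr : β * r ≤ 1 + β * (1 - β) ^ 4) {v w : SatNode ℓ m} (hg : GreedyStep E c nT β r v w) :
    c (v, w) + β * satPot φ β ε c w ≤ 1 + β * (1 - β) ^ 4 := by
  obtain ⟨-, -, hw, h1, h2⟩ := hg
  linarith [hc.le_eta hE (v := v) hw]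

lemma bound_lt (hc : SatCosts φ β ε c) : 1 + β * (1 - β) ^ 4 < 2 - β := by
  have h0 : 0 < 1 - β := by linarith [hc.β_lt]
  have h1 : (1 - β) ^ 3 < 1 := pow_lt_one₀ h0.le (by linarith [hc.β_pos]) (by norm_num)
  have h2 : β * (1 - β) ^ 3 < 1 := by nlinarith [hc.β_lt, hc.β_pos, pow_pos h0 3]
  nlinarith

/-- A node with an edge to `t` of cost at least `2 - β` is not left through that edge. -/
lemma not_greedy_t (hc : SatCosts φ β ε c) (hE : ∀ a b, (a, b) ∈ E ↔ SatEdge φ a b)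
    (hr : β * r ≤ 1 + β * (1 - β) ^ 4) {v : SatNode ℓ m} (hv : 2 - β ≤ c (v, nT)) :
    ¬ GreedyStep E c nT β r v nT := by
  intro hg
  have := hc.greedy_le hE hr hg
  rw [pot_t] at this
  linarith [hc.bound_lt]

/-- The agent leaves a visited variable node by a forward edge. -/
lemma exists_step_var (hc : SatCosts φ β ε c) (hE : ∀ a b, (a, b) ∈ E ↔ SatEdge φ a b)
    (hr : β * r ≤ 1 + β * (1 - β) ^ 4) (hM : Motivating E c nS nT β r) {k : Fin m} {y : Bool}
    (hv : AgentReach E c nS nT β r (nVar k y)) :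
    ∃ w, GreedyStep E c nT β r (nVar k y) w ∧
      ((∃ (k' : Fin m) (y' : Bool), (k' : ℕ) = k + 1 ∧ w = nVar k' y') ∨
        ((k : ℕ) = m - 1 ∧ w = nU 2)) := by
  obtain ⟨w, hg⟩ := hM _ hv (by simp [nVar, nT])
  refine ⟨w, hg, ?_⟩
  rcases satEdge_nVar ((hE _ _).1 hg.2.1) with h | h | rfl
  · exact Or.inl h
  · exact Or.inr h
  · obtain ⟨w, hg'⟩ := hM _ (hv.step hg) (by simp [nMid, nT])
    obtain rfl := satEdge_nMid ((hE _ _).1 hg'.2.1)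
    exact absurd hg' (hc.not_greedy_t hE hr (hc.mid_t k y))

lemma blocked_of_visited (hc : SatCosts φ β ε c) (hE : ∀ a b, (a, b) ∈ E ↔ SatEdge φ a b)
    (hnn : ∀ e ∈ E, 0 ≤ c e)
    (hr : β * r ≤ 1 + β * (1 - β) ^ 4) (hM : Motivating E c nS nT β r) {k : Fin m} {y : Bool}
    (hv : AgentReach E c nS nT β r (nVar k y)) : Blocked β ε c k y := by
  obtain ⟨w, hg, hw⟩ := hc.exists_step_var hE hr hM hv
  have h1 : (1 - β) ^ 3 - ε + β * (2 - β) ≤ c (nVar k y, w) + β * satPot φ β ε c w := by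
    rcases hw with ⟨k', y', -, rfl⟩ | ⟨-, rfl⟩
    · linarith [hc.var_var k k' y y', mul_le_mul_of_nonneg_left (hc.pot_var_ge k' y') hc.β_pos.le]
    · rw [pot_u2]; linarith [hc.var_u k y]
  have h2 := hc.le_eta hE (v := nVar k y) hg.2.2.1
  have he : (nVar k y, nMid k y) ∈ E := (hE _ _).2 (by simp [SatEdge, nVar, nMid])
  have he' : (nMid k y, nT) ∈ E := (hE _ _).2 (by simp [SatEdge, nT, nMid])
  have h3 := zetaCost_le (c := c) (β := β) he ⟨_, isWalkFrom_edge he'⟩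
  have h4 := mul_le_mul_of_nonneg_left (dcost_le_edge hnn he') hc.β_pos.le
  have h5 := hg.2.2.2.1
  have h6 : (1 - β) * (2 - β) ≤ (1 - β) * c (nMid k y, nT) :=
    mul_le_mul_of_nonneg_left (hc.mid_t k y) (by linarith [hc.β_lt])
  have h7 : etaCost E c nT β (nVar k y, nMid k y) =
    c (nVar k y, nMid k y) + β * dcost E c nT (nMid k y) := rfl
  unfold Blocked
  linarith

/-- A type-one shortcut is too expensive, since it leads to a visited, hence blocked, node. -/
lemma not_shortcut (hc : SatCosts φ β ε c) (hE : ∀ a b, (a, b) ∈ E ↔ SatEdge φ a b)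
    (hnn : ∀ e ∈ E, 0 ≤ c e)
    (hr : β * r ≤ 1 + β * (1 - β) ^ 4) (hM : Motivating E c nS nT β r) {i : Fin ℓ} {j : Fin 3}
    {k : Fin m} {y : Bool} (hv : AgentReach E c nS nT β r (nLit i j)) :
    ¬ GreedyStep E c nT β r (nLit i j) (nVar k y) := by
  intro hg
  have h1 := hc.greedy_le hE hr hg
  rw [pot_blocked (hc.blocked_of_visited hE hnn hr hM (hv.step hg))] at h1
  have h2 := hc.lit_var i j k y
  have h3 : β * ε < β * (β * (1 - β) ^ 3) := mul_lt_mul_of_pos_left hc.ε_lt hc.β_pos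
  linarith

/-- The agent does not enter a literal node whose shortcut leads to a blocked node. -/
lemma not_blocked_of_enter (hc : SatCosts φ β ε c) (hE : ∀ a b, (a, b) ∈ E ↔ SatEdge φ a b)
    (hr : β * r ≤ 1 + β * (1 - β) ^ 4) {v : SatNode ℓ m} {i : Fin ℓ} {j : Fin 3}
    (hv : (1 - β) ^ 3 - ε ≤ c (v, nLit i j)) (hg : GreedyStep E c nT β r v (nLit i j)) :
    ¬ Blocked β ε c (φ i j).1 (!(φ i j).2) := by
  intro hb
  have h1 := hc.greedy_le hE hr hg
  have h2 : satPot φ β ε c (nLit i j) = 2 - β + (1 - β) ^ 2 + ((1 - β) ^ 3 - ε) := by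
    simp [satPot, nLit, hb]
  rw [h2] at h1
  linarith [hc.ε_lt']

lemma exists_visited_lit (hc : SatCosts φ β ε c) (hE : ∀ a b, (a, b) ∈ E ↔ SatEdge φ a b)
    (hnn : ∀ e ∈ E, 0 ≤ c e)
    (hr : β * r ≤ 1 + β * (1 - β) ^ 4) (hM : Motivating E c nS nT β r) :
    ∀ (n : ℕ) (hn : n < ℓ), ∃ j, AgentReach E c nS nT β r (nLit ⟨n, hn⟩ j) ∧
      ¬ Blocked β ε c (φ ⟨n, hn⟩ j).1 (!(φ ⟨n, hn⟩ j).2) := by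
  intro n
  induction n with
  | zero =>
    intro hn
    obtain ⟨w, hg⟩ := hM _ .start (by simp [nS, nT])
    obtain ⟨i, j, hi, rfl⟩ := satEdge_nS ((hE _ _).1 hg.2.1)
    obtain rfl : i = ⟨0, hn⟩ := Fin.ext hi
    exact ⟨j, .step .start hg, hc.not_blocked_of_enter hE hr (hc.s_lit _ j) hg⟩
  | succ n ih =>
    intro hn
    obtain ⟨j, hv, -⟩ := ih (by omega)
    obtain ⟨w, hg⟩ := hM _ hv (by simp [nLit, nT])
    rcases satEdge_nLit ((hE _ _).1 hg.2.1) with ⟨i', j', hi, rfl⟩ | ⟨hi, -⟩ | rfl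
    · obtain rfl : i' = ⟨n + 1, hn⟩ := Fin.ext hi
      exact ⟨j', hv.step hg, hc.not_blocked_of_enter hE hr (hc.lit_lit _ _ j j') hg⟩
    · simp only at hi; omega
    · exact absurd hg (hc.not_shortcut hE hnn hr hM hv)

lemma visited_u1 (hc : SatCosts φ β ε c) (hE : ∀ a b, (a, b) ∈ E ↔ SatEdge φ a b)
    (hnn : ∀ e ∈ E, 0 ≤ c e) (hℓ : 0 < ℓ)
    (hr : β * r ≤ 1 + β * (1 - β) ^ 4) (hM : Motivating E c nS nT β r) :
    AgentReach E c nS nT β r (nU 1) := by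
  obtain ⟨j, hv, -⟩ := hc.exists_visited_lit hE hnn hr hM (ℓ - 1) (by omega)
  obtain ⟨w, hg⟩ := hM _ hv (by simp [nLit, nT])
  rcases satEdge_nLit ((hE _ _).1 hg.2.1) with ⟨i', j', hi, rfl⟩ | ⟨-, rfl⟩ | rfl
  · have := i'.2
    simp only at hi; omega
  · have hv' := hv.step hg
    obtain ⟨w, hg'⟩ := hM _ hv' (by simp [nU, nT, Fin.ext_iff])
    obtain rfl := satEdge_nU0 ((hE _ _).1 hg'.2.1)
    exact hv'.step hg'
  · exact absurd hg (hc.not_shortcut hE hnn hr hM hv)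

lemma exists_visited_var (hc : SatCosts φ β ε c) (hE : ∀ a b, (a, b) ∈ E ↔ SatEdge φ a b)
    (hnn : ∀ e ∈ E, 0 ≤ c e) (hℓ : 0 < ℓ)
    (hr : β * r ≤ 1 + β * (1 - β) ^ 4) (hM : Motivating E c nS nT β r) :
    ∀ (n : ℕ) (hn : n < m), ∃ y, AgentReach E c nS nT β r (nVar ⟨n, hn⟩ y) := by
  intro n
  induction n with
  | zero =>
    intro hn
    have hv := hc.visited_u1 hE hnn hℓ hr hM
    obtain ⟨w, hg⟩ := hM _ hv (by simp [nU, nT, Fin.ext_iff])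
    rcases satEdge_nU1 ((hE _ _).1 hg.2.1) with ⟨k, y, hk, rfl⟩ | rfl
    · obtain rfl : k = ⟨0, hn⟩ := Fin.ext hk
      exact ⟨y, hv.step hg⟩
    · exact absurd hg (hc.not_greedy_t hE hr hc.u_t)
  | succ n ih =>
    intro hn
    obtain ⟨y, hv⟩ := ih (by omega)
    obtain ⟨w, hg, hw⟩ := hc.exists_step_var hE hr hM hv
    rcases hw with ⟨k', y', hk, rfl⟩ | ⟨hk, -⟩
    · obtain rfl : k' = ⟨n + 1, hn⟩ := Fin.ext hk
      exact ⟨y', hv.step hg⟩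
    · simp only at hk; omega

/-- The values at the visited variable nodes form a satisfying assignment. -/
lemma satisfiable (hc : SatCosts φ β ε c) (hE : ∀ a b, (a, b) ∈ E ↔ SatEdge φ a b)
    (hnn : ∀ e ∈ E, 0 ≤ c e) (hℓ : 0 < ℓ)
    (hr : β * r ≤ 1 + β * (1 - β) ^ 4) (hM : Motivating E c nS nT β r) :
    ∃ τ : Fin m → Bool, ∀ i : Fin ℓ, ∃ j : Fin 3, τ (φ i j).1 = (φ i j).2 := by
  choose τ hτ using fun k : Fin m => hc.exists_visited_var hE hnn hℓ hr hM k k.2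
  refine ⟨τ, fun i => ?_⟩
  obtain ⟨j, -, hj⟩ := hc.exists_visited_lit hE hnn hr hM i i.2
  refine ⟨j, ?_⟩
  by_contra hne
  apply hj
  rw [← Bool.eq_not.2 hne]
  exact hc.blocked_of_visited hE hnn hr hM (hτ _)

end SatCosts

end Sat

/-- If `φ` has no satisfying assignment, then the 3-SAT reduction
graph `G(φ, β, ε)` admits no cost configuration motivating for any reward
`r ≤ (1 + β(1−β)⁴)/β`, provided
`0 < ε < min {β(1−β)³, β(1−β)²(2−β), β²(1−β)³/(1+β), β²(1−β)²(2−β)/(1+β)}`.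
Together with the fact that satisfiable `φ` yield a configuration motivating for
reward `1/β`, this creates a multiplicative gap of `1 + β(1−β)⁴`, which for
`β = 1/5` equals `1.08192`. -/
theorem stmt_17 {ℓ m : ℕ} (hℓ : 0 < ℓ) (hm : 0 < m)
    (φ : Fin ℓ → Fin 3 → Fin m × Bool) (β ε : ℝ)
    (hβ0 : 0 < β) (hβ1 : β < 1) (hε0 : 0 < ε)
    (hε : ε < min (β * (1 - β) ^ 3) (min (β * (1 - β) ^ 2 * (2 - β))
      (min (β ^ 2 * (1 - β) ^ 3 / (1 + β)) (β ^ 2 * (1 - β) ^ 2 * (2 - β) / (1 + β)))))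
    (G : TaskGraph (SatNode ℓ m)) (hG : IsSatGraph φ β ε G)
    (hunsat : ¬ ∃ τ : Fin m → Bool, ∀ i : Fin ℓ, ∃ j : Fin 3, τ (φ i j).1 = (φ i j).2) :
    (∀ r : ℝ, 0 < r → r ≤ (1 + β * (1 - β) ^ 4) / β →
        ∀ c' : SatNode ℓ m × SatNode ℓ m → ℝ, CostConfig c' →
          ¬ MotivatingConfig G β r c') ∧
      (1 : ℝ) + (1 / 5) * (1 - 1 / 5) ^ 4 = 1.08192 := by
  refine ⟨?_, by norm_num⟩
  intro r _ hr c' hc' hM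
  obtain ⟨hs, ht, hE, hS⟩ := hG
  obtain ⟨c1, c2, c3, c4, c5, c6, c7, c8, c9, c10, c11, c12, c13, c14⟩ := hS
  simp only [lt_min_iff] at hε
  obtain ⟨e1, -, e3, -⟩ := hε
  have h0 : ∀ e, G.c e ≤ addc G c' e := fun e => by
    simpa [addc] using hc' e
  have hc : SatCosts φ β ε (addc G c') :=
    { β_pos := hβ0
      β_lt := hβ1
      ε_pos := hε0
      ε_lt := e1
      ε_lt' := by
        rw [lt_div_iff₀ (by linarith)] at e3
        linarith
      s_lit := fun i j => (c1 i j).symm.le.trans (h0 _)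
      lit_lit := fun i i' j j' => (c2 i i' j j').symm.le.trans (h0 _)
      lit_u := fun i j => (c3 i j).symm.le.trans (h0 _)
      u_var := fun k y => (c4 k y).symm.le.trans (h0 _)
      var_var := fun k k' y y' => (c5 k k' y y').symm.le.trans (h0 _)
      var_u := fun k y => (c6 k y).symm.le.trans (h0 _)
      lit_var := fun i j k y => (c7 i j k y).symm.le.trans (h0 _)
      u_t := c8.symm.le.trans (h0 _)
      var_mid := fun k y => (c9 k y).symm.le.trans (h0 _)
      mid_t := fun k y => (c10 k y).symm.le.trans (h0 _)
      u01 := c11.symm.le.trans (h0 _)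
      u23 := c12.symm.le.trans (h0 _)
      u34 := c13.symm.le.trans (h0 _)
      u4t := c14.symm.le.trans (h0 _) }
  have hr' : β * r ≤ 1 + β * (1 - β) ^ 4 := by
    rw [le_div_iff₀ hβ0] at hr
    linarith
  have hM' : Motivating G.E (addc G c') nS nT β r := by
    simpa only [MotivatingConfig, hs, ht] using hM
  exact hunsat (hc.satisfiable hE (fun e he => (G.c_nonneg e he).trans (h0 e)) hℓ hr' hM')
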